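/- The subgroup of SL(2,ℤ) generated by the matrices A = [[1,1],[0,1]] and B⁴ = [[1,0],[-4,1]] has finite index in SL(2,ℤ). -/

import Mathlib

/-- The matrix `A = [[1,1],[0,1]]` as an element of `SL(2,ℤ)`. -/
def A : Matrix.SpecialLinearGroup (Fin 2) ℤ :=
  ⟨!![1, 1; 0, 1], by norm_num [Matrix.det_fin_two_of]⟩

/-- The matrix `B = [[1,0],[-1,1]]` as an element of `SL(2,ℤ)`. -/
def B : Matrix.SpecialLinearGroup (Fin 2) ℤ :=
  ⟨!![1, 0; -1, 1], by norm_num [Matrix.det_fin_two_of]⟩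

/-!
For `N ≤ 4` the subgroup generated by `A` and `B ^ N` is the whole congruence subgroup `Γ₁(N)`.
The proof is a Euclidean algorithm on the first column `(a, c)` of an element of `Γ₁(N)`: left
multiplication by powers of `A` changes `a` modulo `c`, and left multiplication by powers of `B ^ N`
changes `c` modulo `N * a`. Taking remainders of least absolute value gives first `2 * |a| ≤ |c|`
and then a new `c'` with `2 * |c'| ≤ N * |a| ≤ N * |c| / 2`. So `|c'| < |c|` if `N < 4`, and also if
`N = 4`, because then `a` is odd and `4` divides `c`, so that `2 * |a| ≠ |c|`. The descent ends at
`c = 0`, where the matrix is `± A ^ k`; the sign `-1` lies in `Γ₁(N)` only if `N` divides `2`, and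
then `-1 = (A * B ^ 2) ^ 2` is generated too.
-/

open CongruenceSubgroup
open scoped MatrixGroups

section Remainders

lemma exists_two_mul_abs_add_mul_le (a : ℤ) {m : ℤ} (hm : m ≠ 0) :
    ∃ k : ℤ, 2 * |a + k * m| ≤ |m| := by
  have hm' : 0 < m.natAbs := Int.natAbs_pos.mpr hm
  refine ⟨-(a.bdiv m.natAbs * m.sign), ?_⟩
  have hbmod : a + -(a.bdiv m.natAbs * m.sign) * m = a.bmod m.natAbs := by
    rw [Int.bmod_eq_self_sub_bdiv_mul, Int.natCast_natAbs, ← Int.sign_mul_self_eq_abs]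
    ring
  have hlower := Int.le_bmod (x := a) hm'
  have hupper := Int.bmod_le (x := a) hm'
  rw [hbmod, Int.abs_eq_natAbs, Int.abs_eq_natAbs]
  omega

lemma two_mul_abs_ne_abs_of_odd_of_four_dvd {a c : ℤ} (ha : Odd a) (hc : 4 ∣ c) :
    2 * |a| ≠ |c| := by
  rw [Int.odd_iff] at ha
  rw [Int.abs_eq_natAbs, Int.abs_eq_natAbs]
  omega

lemma exists_add_mul_ne_zero_and_mul_abs_lt {N : ℕ} (hN : N ≤ 4) {a c : ℤ}
    (ha : (N : ℤ) ∣ a - 1) (hc : (N : ℤ) ∣ c) (hc0 : c ≠ 0) :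
    ∃ k : ℤ, a + k * c ≠ 0 ∧ N * |a + k * c| < 2 * |c| := by
  obtain ⟨k, hk⟩ := exists_two_mul_abs_add_mul_le a hc0
  have hcpos : 0 < |c| := abs_pos.mpr hc0
  have hdvd : (N : ℤ) ∣ a + k * c - 1 := by
    rw [add_sub_right_comm]
    exact ha.add (hc.mul_left k)
  rcases eq_or_ne (a + k * c) 0 with hzero | hne
  · -- Only `N = 1` divides `-1`, and then any nonzero multiple of `c` up to `|c|` will do.
    have hN1 : N = 1 := by
      rw [hzero, zero_sub, dvd_neg] at hdvd
      exact Nat.dvd_one.mp (by exact_mod_cast hdvd)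
    have hnext : a + (k + 1) * c = c := by linear_combination hzero
    refine ⟨k + 1, ?_, ?_⟩ <;> rw [hnext]
    · exact hc0
    · rw [hN1, Nat.cast_one]
      linarith
  · refine ⟨k, hne, ?_⟩
    rcases hN.lt_or_eq with hlt | rfl
    · interval_cases N <;> push_cast <;> linarith
    · have hodd : Odd (a + k * c) := Int.odd_iff.mpr (by omega)
      have hstrict := two_mul_abs_ne_abs_of_odd_of_four_dvd hodd hc
      push_cast
      omega

end Remainders

section Entries

lemma A_eq_T : A = ModularGroup.T := rfl

lemma B_eq_S_mul_T_mul_S_inv : B = ModularGroup.S * ModularGroup.T * ModularGroup.S⁻¹ := by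
  decide

lemma coe_A_zpow (k : ℤ) : ((A ^ k : SL(2, ℤ)) : Matrix (Fin 2) (Fin 2) ℤ) = !![1, k; 0, 1] := by
  rw [A_eq_T, ModularGroup.coe_T_zpow]

lemma coe_B_zpow (k : ℤ) : ((B ^ k : SL(2, ℤ)) : Matrix (Fin 2) (Fin 2) ℤ) = !![1, 0; -k, 1] := by
  rw [B_eq_S_mul_T_mul_S_inv, conj_zpow]
  simp [ModularGroup.coe_S, ModularGroup.coe_T_zpow, Matrix.adjugate_fin_two_of]

lemma A_zpow_mul_apply_zero_zero (k : ℤ) (g : SL(2, ℤ)) :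
    (A ^ k * g) 0 0 = g 0 0 + k * g 1 0 := by
  simp [coe_A_zpow, Matrix.mul_apply, Fin.sum_univ_two]

lemma A_zpow_mul_apply_one_zero (k : ℤ) (g : SL(2, ℤ)) : (A ^ k * g) 1 0 = g 1 0 := by
  simp [coe_A_zpow, Matrix.mul_apply, Fin.sum_univ_two]

lemma B_zpow_mul_apply_one_zero (k : ℤ) (g : SL(2, ℤ)) :
    (B ^ k * g) 1 0 = g 1 0 - k * g 0 0 := by
  simp [coe_B_zpow, Matrix.mul_apply, Fin.sum_univ_two, neg_add_eq_sub]

lemma apply_zero_zero_mul_apply_one_one_sub {R : Type*} [CommRing R] (g : SL(2, R)) :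
    g 0 0 * g 1 1 - g 0 1 * g 1 0 = 1 :=
  (Matrix.det_fin_two _).symm.trans g.det_coe

lemma eq_A_zpow {g : SL(2, ℤ)} (ha : g 0 0 = 1) (hc : g 1 0 = 0) : g = A ^ g 0 1 := by
  have hd : g 1 1 = 1 := by
    simpa [ha, hc] using apply_zero_zero_mul_apply_one_one_sub g
  ext i j
  fin_cases i <;> fin_cases j <;> simp [coe_A_zpow, ha, hc, hd]

lemma A_mul_B_sq_sq : (A * B ^ 2) ^ 2 = -1 := by
  decide

lemma mem_Gamma1_iff_dvd {N : ℕ} {g : SL(2, ℤ)} :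
    g ∈ Gamma1 N ↔ (N : ℤ) ∣ g 0 0 - 1 ∧ (N : ℤ) ∣ g 1 0 := by
  have hdet : (g 0 0 : ZMod N) * g 1 1 - g 0 1 * g 1 0 = 1 := by
    exact_mod_cast congrArg (Int.cast : ℤ → ZMod N) (apply_zero_zero_mul_apply_one_one_sub g)
  rw [Gamma1_mem, ← ZMod.intCast_zmod_eq_zero_iff_dvd, ← ZMod.intCast_zmod_eq_zero_iff_dvd,
    Int.cast_sub, Int.cast_one, sub_eq_zero]
  refine ⟨fun ⟨ha, _, hc⟩ ↦ ⟨ha, hc⟩, fun ⟨ha, hc⟩ ↦ ⟨ha, ?_, hc⟩⟩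
  simpa [ha, hc] using hdet

end Entries

section Descent

variable {N : ℕ}

lemma A_mem_closure : A ∈ Subgroup.closure {A, B ^ N} :=
  Subgroup.subset_closure (Set.mem_insert _ _)

lemma B_zpow_mem_closure_of_dvd {k : ℤ} (hk : (N : ℤ) ∣ k) :
    B ^ k ∈ Subgroup.closure {A, B ^ N} := by
  obtain ⟨m, rfl⟩ := hk
  rw [zpow_mul, zpow_natCast]
  exact zpow_mem (Subgroup.subset_closure (by simp)) m

lemma closure_A_B_pow_le_Gamma1 (N : ℕ) : Subgroup.closure {A, B ^ N} ≤ Gamma1 N := by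
  rw [Subgroup.closure_le, Set.insert_subset_iff, Set.singleton_subset_iff]
  refine ⟨?_, ?_⟩ <;> rw [SetLike.mem_coe, mem_Gamma1_iff_dvd]
  · simp [A]
  · rw [← zpow_natCast, coe_B_zpow]
    simp

lemma neg_one_mem_closure_of_dvd_two (hN : N ∣ 2) :
    (-1 : SL(2, ℤ)) ∈ Subgroup.closure {A, B ^ N} := by
  have hB : B ^ (2 : ℤ) ∈ Subgroup.closure {A, B ^ N} :=
    B_zpow_mem_closure_of_dvd (by exact_mod_cast hN)
  rw [← A_mul_B_sq_sq]
  exact pow_mem (mul_mem A_mem_closure hB) 2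

lemma mem_closure_of_mem_Gamma1_of_apply_one_zero_eq_zero {g : SL(2, ℤ)} (hg : g ∈ Gamma1 N)
    (hc : g 1 0 = 0) : g ∈ Subgroup.closure {A, B ^ N} := by
  have hunit : g 0 0 * g 1 1 = 1 := by
    simpa [hc] using apply_zero_zero_mul_apply_one_one_sub g
  rcases Int.eq_one_or_neg_one_of_mul_eq_one hunit with ha | ha
  · rw [eq_A_zpow ha hc]
    exact zpow_mem A_mem_closure _
  · have hN : N ∣ 2 := by
      have h := (mem_Gamma1_iff_dvd.mp hg).1
      rw [ha, show (-1 - 1 : ℤ) = -2 by norm_num, dvd_neg] at h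
      exact_mod_cast h
    have hneg : -g = A ^ (-g) 0 1 := eq_A_zpow (by simp [ha]) (by simp [hc])
    rw [← neg_neg g, ← neg_one_mul (-g), hneg]
    exact mul_mem (neg_one_mem_closure_of_dvd_two hN) (zpow_mem A_mem_closure _)

lemma exists_mem_closure_abs_mul_apply_one_zero_lt (hN : N ≤ 4) {g : SL(2, ℤ)}
    (hg : g ∈ Gamma1 N) (hc : g 1 0 ≠ 0) :
    ∃ h ∈ Subgroup.closure {A, B ^ N}, |(h * g) 1 0| < |g 1 0| := by
  obtain ⟨ha_dvd, hc_dvd⟩ := mem_Gamma1_iff_dvd.mp hg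
  have hN0 : (N : ℤ) ≠ 0 := fun h ↦ hc (zero_dvd_iff.mp (h ▸ hc_dvd))
  obtain ⟨k, ha0, ha_lt⟩ := exists_add_mul_ne_zero_and_mul_abs_lt hN ha_dvd hc_dvd hc
  obtain ⟨l, hl⟩ := exists_two_mul_abs_add_mul_le (g 1 0) (mul_ne_zero hN0 ha0)
  rw [abs_mul, Nat.abs_cast] at hl
  have hentry : (B ^ (-(N * l)) * A ^ k * g) 1 0 = g 1 0 + l * (N * (g 0 0 + k * g 1 0)) := by
    rw [mul_assoc, B_zpow_mul_apply_one_zero, A_zpow_mul_apply_zero_zero,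
      A_zpow_mul_apply_one_zero]
    ring
  refine ⟨B ^ (-(N * l)) * A ^ k, ?_, ?_⟩
  · exact mul_mem (B_zpow_mem_closure_of_dvd (dvd_mul_right _ _).neg_right)
      (zpow_mem A_mem_closure _)
  · rw [hentry]
    linarith

lemma Gamma1_le_closure_A_B_pow (hN : N ≤ 4) : Gamma1 N ≤ Subgroup.closure {A, B ^ N} := by
  intro g hg
  induction hn : (g 1 0).natAbs using Nat.strong_induction_on generalizing g with
  | _ n ih =>
    by_cases hc : g 1 0 = 0
    · exact mem_closure_of_mem_Gamma1_of_apply_one_zero_eq_zero hg hc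
    · obtain ⟨h, hh, hlt⟩ := exists_mem_closure_abs_mul_apply_one_zero_lt hN hg hc
      have hdesc : ((h * g) 1 0).natAbs < n := by
        zify [← hn]
        exact hlt
      rw [← Subgroup.mul_mem_cancel_left _ hh]
      exact ih _ hdesc (mul_mem (closure_A_B_pow_le_Gamma1 N hh) hg) rfl

theorem closure_A_B_pow_eq_Gamma1 (hN : N ≤ 4) : Subgroup.closure {A, B ^ N} = Gamma1 N :=
  (closure_A_B_pow_le_Gamma1 N).antisymm (Gamma1_le_closure_A_B_pow hN)

end Descent

theorem subgroup_A_Bfourth_finiteIndex_general {N : ℕ} [NeZero N] (hN : N ≤ 4) :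
    (Subgroup.closure {A, B ^ N}).FiniteIndex := by
  rw [closure_A_B_pow_eq_Gamma1 hN]
  infer_instance

/-- The subgroup of `SL(2,ℤ)` generated by `A` and `B⁴` has finite index. -/
theorem subgroup_A_Bfourth_finiteIndex :
    (Subgroup.closure ({A, B ^ 4} : Set (Matrix.SpecialLinearGroup (Fin 2) ℤ))).FiniteIndex :=
  subgroup_A_Bfourth_finiteIndex_general le_rfl
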